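/- Let (G_i)_{i∈ι} be a family of groups and G = *_{i∈ι} G_i their free product (coproduct of groups). Let i₀ ∈ ι, let x be the image in G of a non-trivial element of G_{i₀}, and let g ∈ G satisfy g⁻¹ x g = x. Then g lies in the image of G_{i₀} in G. -/

import Mathlib

/-!
Write `g = m * w` with `m ∈ G i` and `w` a reduced word not starting in `G i`. Conjugating
`a ∈ G i`, `a ≠ 1`, by `g` is conjugating `b = m⁻¹ * a * m ≠ 1` by `w`. If `w` is non-empty, then
`w⁻¹ * b * w` is already reduced and has at least three letters, so by uniqueness of reduced words
it lies in no factor. Hence a conjugate of `a` by `g` can only lie in a factor if `g = m`.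
-/

namespace FreeProductMalnormal

open Monoid Monoid.CoprodI

section MonoidFactors

variable {ι : Type*} {M : ι → Type*} [∀ i, Monoid (M i)]

theorem word_prod_injective : Function.Injective (Word.prod : Word M → CoprodI M) := by
  classical
  exact Word.equiv.symm.injective

theorem exists_word_of_mul_prod_eq (i : ι) (g : CoprodI M) :
    ∃ (m : M i) (w : Word M), w.fstIdx ≠ some i ∧ of m * w.prod = g := by
  classical
  let p := Word.equivPair i (Word.equiv g)
  refine ⟨p.head, p.tail, p.fstIdx_ne, ?_⟩
  rw [← Word.prod_smul, Word.equivPair_head_smul_equivPair_tail]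
  exact Word.equiv.symm_apply_apply g

theorem length_toList_le_one_of_prod_eq_of {w : Word M} {i : ι} {m : M i} (h : w.prod = of m) :
    w.toList.length ≤ 1 := by
  by_cases hm : m = 1
  · have hw : w = Word.empty := word_prod_injective (by simp [h, hm])
    simp [hw, Word.empty]
  · have hw : w = (NeWord.singleton m hm).toWord :=
      word_prod_injective (h.trans (NeWord.prod_singleton m hm).symm)
    simp [hw, NeWord.toWord, NeWord.toList]

theorem fstIdx_toWord {i j : ι} (w : NeWord M i j) : w.toWord.fstIdx = some i := by
  simp [Word.fstIdx, NeWord.toWord, NeWord.toList_head?]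

end MonoidFactors

section GroupFactors

variable {ι : Type*} {G : ι → Type*} [∀ i, Group (G i)]

theorem inv_prod_mul_of_mul_prod_ne_of {i j k l : ι} (w : NeWord G i j) (hki : k ≠ i)
    {a : G k} (ha : a ≠ 1) (b : G l) : w.prod⁻¹ * of a * w.prod ≠ of b := by
  intro h
  let v : NeWord G j j := (w.inv.append hki.symm (.singleton a ha)).append hki w
  have hv : v.prod = of b := by simpa [v] using h
  have hv_le : v.toList.length ≤ 1 := length_toList_le_one_of_prod_eq_of hv
  have hw_pos : 0 < w.toList.length := List.length_pos_of_ne_nil w.toList_ne_nil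
  simp only [v, NeWord.toList, List.length_append, List.length_singleton] at hv_le
  omega

theorem eq_empty_of_inv_prod_mul_of_mul_prod_eq_of {i j : ι} {w : Word G}
    (hw : w.fstIdx ≠ some i) {a : G i} (ha : a ≠ 1) {b : G j}
    (h : w.prod⁻¹ * of a * w.prod = of b) : w = Word.empty := by
  by_contra hne
  obtain ⟨k, l, v, rfl⟩ := NeWord.of_word w hne
  have hik : i ≠ k := by
    rintro rfl
    exact hw (fstIdx_toWord v)
  exact inv_prod_mul_of_mul_prod_ne_of v hik ha b h

end GroupFactors

end FreeProductMalnormal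

open Monoid.CoprodI FreeProductMalnormal in
theorem stmt12_general {ι : Type*} {G : ι → Type*} [∀ i, Group (G i)] {i j : ι}
    {a : G i} (ha : a ≠ 1) {b : G j} {g : Monoid.CoprodI G} (hg : g⁻¹ * of a * g = of b) :
    g ∈ (of : G i →* Monoid.CoprodI G).range := by
  obtain ⟨m, w, hw, rfl⟩ := exists_word_of_mul_prod_eq i g
  have hconj_ne : m⁻¹ * a * m ≠ 1 := by
    simpa only [inv_inv] using (conj_eq_one_iff (a := m⁻¹) (b := a)).not.mpr ha
  have hconj : w.prod⁻¹ * of (m⁻¹ * a * m) * w.prod = of b := by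
    rw [← hg]
    simp only [map_mul, map_inv, mul_inv_rev, mul_assoc]
  have hempty : w = Word.empty := eq_empty_of_inv_prod_mul_of_mul_prod_eq_of hw hconj_ne hconj
  exact ⟨m, by rw [hempty, Word.prod_empty, mul_one]⟩

theorem stmt12 {ι : Type*} (G : ι → Type*) [∀ i, Group (G i)] (i₀ : ι)
    (a : G i₀) (ha : a ≠ 1) (g : Monoid.CoprodI G)
    (hg : g⁻¹ * Monoid.CoprodI.of a * g = Monoid.CoprodI.of a) :
    g ∈ (Monoid.CoprodI.of : G i₀ →* Monoid.CoprodI G).range :=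
  stmt12_general ha hg
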